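/- arXiv:2205.04303 — 3 statements merged into one kernel-verified Lean document; each statement's English description precedes it below -/
import Mathlib

section
/- Let α ∈ ℝ, let {f_n} be a sequence of cyclic functions for D_α converging to f in the norm of D_α, and assume: (1) for each n the quotient f/f_n is a multiplier of D_α and there exists a constant C > 0 with ‖f/f_n‖_{M(D_α)} ≤ C for all n; (2) ‖1 − f/f_n‖_α → 0 as n → ∞. Then f is cyclic for D_α. -/
open Filter Topology

noncomputable section

/-- Membership in the Dirichlet-type space `D_α`, described via Taylor coefficients. -/
def MemD (α : ℝ) (a : ℕ → ℂ) : Prop :=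
  Summable (fun k : ℕ => ‖a k‖ ^ 2 * ((k : ℝ) + 1) ^ α)

/-- The norm of `D_α`, on coefficient sequences. -/
def DNorm (α : ℝ) (a : ℕ → ℂ) : ℝ :=
  Real.sqrt (∑' k : ℕ, ‖a k‖ ^ 2 * ((k : ℝ) + 1) ^ α)

/-- The inner product of `D_α`, on coefficient sequences. -/
def Dinner (α : ℝ) (a b : ℕ → ℂ) : ℂ :=
  ∑' k : ℕ, a k * (starRingEnd ℂ) (b k) * ((((k : ℝ) + 1) ^ α : ℝ) : ℂ)

/-- Cauchy product of coefficient sequences (coefficients of the product function). -/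
def mulCoeff (a b : ℕ → ℂ) : ℕ → ℂ :=
  fun k => ∑ i ∈ Finset.range (k + 1), a i * b (k - i)

/-- Coefficient sequence of the constant function `1`. -/
def oneCoeff : ℕ → ℂ := fun k => if k = 0 then 1 else 0

/-- `f` is cyclic for (the shift operator on) `D_α`: there are polynomials `p n` with
`‖p n · f - 1‖_α → 0`. -/
def Cyclic (α : ℝ) (f : ℕ → ℂ) : Prop :=
  ∃ p : ℕ → Polynomial ℂ,
    Tendsto (fun n => DNorm α (fun k => mulCoeff (p n).coeff f k - oneCoeff k)) atTop (𝓝 0)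

/-- Coefficients of `S^t f`, where `S` is the shift operator `(Sf)(z) = z f(z)`. -/
def shiftPow (t : ℕ) (a : ℕ → ℂ) : ℕ → ℂ :=
  fun k => if k < t then 0 else a (k - t)

/-- Operator norm of `S^t` on `D_α`. -/
def shiftOpNorm (α : ℝ) (t : ℕ) : ℝ :=
  sSup {r : ℝ | ∃ a : ℕ → ℂ, MemD α a ∧ DNorm α a ≤ 1 ∧ r = DNorm α (shiftPow t a)}

/-- `p` is a `d`-th optimal polynomial approximant to `1/f` in `D_α`. -/
def IsOPA (α : ℝ) (f : ℕ → ℂ) (d : ℕ) (p : Polynomial ℂ) : Prop :=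
  p.natDegree ≤ d ∧
    ∀ q : Polynomial ℂ, q.natDegree ≤ d →
      DNorm α (fun k => mulCoeff p.coeff f k - oneCoeff k) ≤
        DNorm α (fun k => mulCoeff q.coeff f k - oneCoeff k)

/-- The matrix `M` of the linear system determining the `d`-th o.p.a. to `1/f`:
`m_{j,k} = ⟨S^k f, S^j f⟩_α`. -/
def opaMatrix (α : ℝ) (d : ℕ) (f : ℕ → ℂ) : Matrix (Fin (d + 1)) (Fin (d + 1)) ℂ :=
  Matrix.of fun j k => Dinner α (shiftPow (k : ℕ) f) (shiftPow (j : ℕ) f)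

/-- The vector `b` of the linear system determining the `d`-th o.p.a. to `1/f`:
`b_j = ⟨1, S^j f⟩_α`. -/
def opaVec (α : ℝ) (d : ℕ) (f : ℕ → ℂ) : Fin (d + 1) → ℂ :=
  fun j => Dinner α oneCoeff (shiftPow (j : ℕ) f)

/-- Frobenius norm of a complex matrix. -/
def frobNorm {m n : ℕ} (M : Matrix (Fin m) (Fin n) ℂ) : ℝ :=
  Real.sqrt (∑ j, ∑ k, ‖M j k‖ ^ 2)

/-- Euclidean norm on `ℂ^m`. -/
def euclNorm {m : ℕ} (v : Fin m → ℂ) : ℝ :=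
  Real.sqrt (∑ j, ‖v j‖ ^ 2)

/-- `α`-weighted Frobenius norm: the Frobenius norm of the matrix in the orthonormal
basis `{z^k/(k+1)^{α/2}}` of the map whose matrix in `{z^k}` is `M`. -/
def wFrobNorm (α : ℝ) {m : ℕ} (M : Matrix (Fin m) (Fin m) ℂ) : ℝ :=
  Real.sqrt (∑ j, ∑ k, ‖M j k‖ ^ 2 * (((j : ℕ) : ℝ) + 1) ^ α * (((k : ℕ) : ℝ) + 1) ^ (-α))

/-- Coefficients of the reproducing kernel of `D_α` at `w ∈ 𝔻`. -/
def kern (α : ℝ) (w : ℂ) : ℕ → ℂ :=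
  fun k => (starRingEnd ℂ) w ^ k / ((((k : ℝ) + 1) ^ α : ℝ) : ℂ)

/-! The idea is to work with `[f]`, the closure in `D_α` of the polynomial multiples of `f`: `f` is
cyclic iff `1 ∈ [f]`. Multiplication by `q = f / g` is continuous by the closed graph theorem and
maps `p g` to `p f`, hence maps `[g]` into `[f]`; if `g` is cyclic, then `q = q · 1 ∈ [f]`. So all
the quotients `f / f_n` lie in the closed set `[f]`, and so does their limit `1`. -/

open Polynomial

section CauchyProduct

theorem mk_mulCoeff (a b : ℕ → ℂ) :
    PowerSeries.mk (mulCoeff a b) = PowerSeries.mk a * PowerSeries.mk b := by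
  ext k
  simp [mulCoeff, PowerSeries.coeff_mul, Finset.Nat.sum_antidiagonal_eq_sum_range_succ_mk]

theorem mk_oneCoeff : PowerSeries.mk oneCoeff = 1 := by
  ext k
  simp [oneCoeff, PowerSeries.coeff_one]

theorem mk_polynomial_coeff (p : ℂ[X]) : PowerSeries.mk p.coeff = (p : PowerSeries ℂ) := by
  ext k
  simp

theorem powerSeries_mk_injective :
    Function.Injective (PowerSeries.mk : (ℕ → ℂ) → PowerSeries ℂ) :=
  fun a b h ↦ funext fun k ↦ by simpa using congrArg (PowerSeries.coeff k) h

theorem mulCoeff_assoc (a b c : ℕ → ℂ) :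
    mulCoeff (mulCoeff a b) c = mulCoeff a (mulCoeff b c) :=
  powerSeries_mk_injective <| by simp only [mk_mulCoeff, mul_assoc]

theorem mulCoeff_left_comm (a b c : ℕ → ℂ) :
    mulCoeff a (mulCoeff b c) = mulCoeff b (mulCoeff a c) :=
  powerSeries_mk_injective <| by simp only [mk_mulCoeff, mul_left_comm]

theorem mulCoeff_oneCoeff (a : ℕ → ℂ) : mulCoeff a oneCoeff = a :=
  powerSeries_mk_injective <| by simp only [mk_mulCoeff, mk_oneCoeff, mul_one]

theorem mulCoeff_add (a b c : ℕ → ℂ) : mulCoeff a (b + c) = mulCoeff a b + mulCoeff a c := by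
  funext k
  simp [mulCoeff, mul_add, Finset.sum_add_distrib]

theorem add_mulCoeff (a b c : ℕ → ℂ) : mulCoeff (a + b) c = mulCoeff a c + mulCoeff b c := by
  funext k
  simp [mulCoeff, add_mul, Finset.sum_add_distrib]

theorem mulCoeff_smul (c : ℂ) (a b : ℕ → ℂ) : mulCoeff a (c • b) = c • mulCoeff a b := by
  funext k
  simp [mulCoeff, Finset.mul_sum, mul_left_comm]

theorem coeff_mul_eq_mulCoeff (p r : ℂ[X]) : (p * r).coeff = mulCoeff p.coeff r.coeff :=
  powerSeries_mk_injective <| by simp only [mk_mulCoeff, mk_polynomial_coeff, Polynomial.coe_mul]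

theorem mulCoeff_coeff_C (c : ℂ) (a : ℕ → ℂ) : mulCoeff (C c).coeff a = c • a := by
  refine powerSeries_mk_injective ?_
  ext k
  simp [mk_mulCoeff, mk_polynomial_coeff]

theorem mulCoeff_coeff_X (a : ℕ → ℂ) : mulCoeff (X : ℂ[X]).coeff a = shiftPow 1 a := by
  refine powerSeries_mk_injective ?_
  rw [mk_mulCoeff, mk_polynomial_coeff, Polynomial.coe_X]
  ext k
  cases k <;> simp [shiftPow, PowerSeries.coeff_succ_X_mul]

theorem continuous_mulCoeff (a : ℕ → ℂ) : Continuous (mulCoeff a) := by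
  unfold mulCoeff
  fun_prop

end CauchyProduct

section WeightedSequences

/-- Multiplication of the `k`-th Taylor coefficient by `(k + 1) ^ (α / 2)`. It carries `D_α`
isometrically onto `ℓ²`, which is how the Hilbert space structure of `D_α` is accessed here. -/
def weightEquiv (α : ℝ) : (ℕ → ℂ) ≃L[ℂ] (ℕ → ℂ) :=
  ContinuousLinearEquiv.piCongrRight fun k : ℕ ↦
    ContinuousLinearEquiv.unitsEquivAut ℂ <|
      Units.mk0 ((((k : ℝ) + 1) ^ (α / 2) : ℝ) : ℂ) <| Complex.ofReal_ne_zero.mpr (by positivity)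

variable {α : ℝ} {a b : ℕ → ℂ}

theorem norm_weightEquiv_apply_sq (α : ℝ) (a : ℕ → ℂ) (k : ℕ) :
    ‖weightEquiv α a k‖ ^ 2 = ‖a k‖ ^ 2 * ((k : ℝ) + 1) ^ α := by
  have weight_sq : (((k : ℝ) + 1) ^ (α / 2)) ^ 2 = ((k : ℝ) + 1) ^ α := by
    rw [← Real.rpow_mul_natCast (by positivity), Nat.cast_ofNat, div_mul_cancel₀ α two_ne_zero]
  simp [weightEquiv, mul_pow, weight_sq]

theorem memD_iff_memℓp : MemD α a ↔ Memℓp (weightEquiv α a) 2 := by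
  simp [memℓp_gen_iff, MemD, norm_weightEquiv_apply_sq]

theorem MemD.add (ha : MemD α a) (hb : MemD α b) : MemD α (a + b) := by
  rw [memD_iff_memℓp] at *
  simpa using ha.add hb

theorem MemD.sub (ha : MemD α a) (hb : MemD α b) : MemD α (a - b) := by
  rw [memD_iff_memℓp] at *
  simpa using ha.sub hb

theorem MemD.const_smul (c : ℂ) (ha : MemD α a) : MemD α (c • a) := by
  rw [memD_iff_memℓp] at *
  simpa using ha.const_smul c

theorem memD_oneCoeff (α : ℝ) : MemD α oneCoeff :=
  summable_of_ne_finset_zero (s := {0}) fun k hk ↦ by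
    simp [oneCoeff, Finset.notMem_singleton.mp hk]

theorem weight_succ_le (α : ℝ) (k : ℕ) :
    (((k + 1 : ℕ) : ℝ) + 1) ^ α ≤ 2 ^ |α| * ((k : ℝ) + 1) ^ α := by
  have hk : (0 : ℝ) < (k : ℝ) + 1 := by positivity
  set r : ℝ := (((k + 1 : ℕ) : ℝ) + 1) / (k + 1) with hr
  have one_le_r : 1 ≤ r := by
    rw [hr, one_le_div hk]
    push_cast
    linarith
  have r_le_two : r ≤ 2 := by
    rw [hr, div_le_iff₀ hk]
    push_cast
    linarith [k.cast_nonneg (α := ℝ)]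
  calc (((k + 1 : ℕ) : ℝ) + 1) ^ α = r ^ α * ((k : ℝ) + 1) ^ α := by
        rw [← Real.mul_rpow (by positivity) hk.le, div_mul_cancel₀ _ hk.ne']
    _ ≤ r ^ |α| * ((k : ℝ) + 1) ^ α := by
        gcongr
        exact le_abs_self α
    _ ≤ 2 ^ |α| * ((k : ℝ) + 1) ^ α := by gcongr

theorem MemD.shiftPow_one (ha : MemD α a) : MemD α (shiftPow 1 a) := by
  refine (summable_nat_add_iff 1).mp <| .of_nonneg_of_le (fun k ↦ by positivity) (fun k ↦ ?_)
    (ha.mul_left (2 ^ |α|))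
  calc ‖shiftPow 1 a (k + 1)‖ ^ 2 * (((k + 1 : ℕ) : ℝ) + 1) ^ α
      = ‖a k‖ ^ 2 * (((k + 1 : ℕ) : ℝ) + 1) ^ α := by simp [shiftPow]
    _ ≤ ‖a k‖ ^ 2 * (2 ^ |α| * ((k : ℝ) + 1) ^ α) := by gcongr; exact weight_succ_le α k
    _ = 2 ^ |α| * (‖a k‖ ^ 2 * ((k : ℝ) + 1) ^ α) := by ring

/-- The element of `ℓ²` corresponding to the function in `D_α` with Taylor coefficients `a`. -/
def MemD.toLp (ha : MemD α a) : lp (fun _ : ℕ ↦ ℂ) 2 :=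
  ⟨weightEquiv α a, memD_iff_memℓp.mp ha⟩

theorem MemD.toLp_sub (ha : MemD α a) (hb : MemD α b) : ha.toLp - hb.toLp = (ha.sub hb).toLp :=
  Subtype.ext (map_sub (weightEquiv α) a b).symm

theorem MemD.norm_toLp (ha : MemD α a) : ‖ha.toLp‖ = DNorm α a := by
  simp [lp.norm_eq_tsum_rpow, DNorm, Real.sqrt_eq_rpow, MemD.toLp, norm_weightEquiv_apply_sq]

theorem tendsto_toLp_iff {ι : Type*} {l : Filter ι} {u : ι → ℕ → ℂ} (hu : ∀ i, MemD α (u i))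
    (ha : MemD α a) :
    Tendsto (fun i ↦ (hu i).toLp) l (𝓝 ha.toLp) ↔
      Tendsto (fun i ↦ DNorm α (u i - a)) l (𝓝 0) := by
  rw [tendsto_iff_norm_sub_tendsto_zero]
  simp only [MemD.toLp_sub, MemD.norm_toLp]

/-- The Taylor coefficients of the function in `D_α` corresponding to an element of `ℓ²`; inverse
to `MemD.toLp`. -/
def taylorCoeff (α : ℝ) : lp (fun _ : ℕ ↦ ℂ) 2 →L[ℂ] (ℕ → ℂ) :=
  (weightEquiv α).symm ∘L ContinuousLinearMap.pi (lp.evalCLM ℂ (fun _ : ℕ ↦ ℂ) 2)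

theorem taylorCoeff_injective (α : ℝ) : Function.Injective (taylorCoeff α) :=
  fun _ _ h ↦ lp.ext ((weightEquiv α).symm.injective h)

theorem memD_taylorCoeff (x : lp (fun _ : ℕ ↦ ℂ) 2) : MemD α (taylorCoeff α x) := by
  rw [memD_iff_memℓp, taylorCoeff, ContinuousLinearMap.comp_apply, ContinuousLinearEquiv.coe_coe,
    ContinuousLinearEquiv.apply_symm_apply]
  exact lp.memℓp x

theorem taylorCoeff_toLp (ha : MemD α a) : taylorCoeff α ha.toLp = a :=
  (weightEquiv α).symm_apply_apply a

end WeightedSequences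

section Multipliers

/-- Multipliers of `D_α`, in terms of Taylor coefficients. Boundedness of the multiplication
operator is not required: it is automatic, see `IsMultiplier.continuous_mulLp`. -/
def IsMultiplier (α : ℝ) (φ : ℕ → ℂ) : Prop :=
  ∀ h, MemD α h → MemD α (mulCoeff φ h)

variable {α : ℝ} {φ : ℕ → ℂ}

theorem IsMultiplier.memD (hφ : IsMultiplier α φ) : MemD α φ := by
  simpa only [mulCoeff_oneCoeff] using hφ oneCoeff (memD_oneCoeff α)

theorem isMultiplier_polynomial_coeff (α : ℝ) (p : ℂ[X]) : IsMultiplier α p.coeff := by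
  intro h hh
  induction p using Polynomial.induction_on with
  | C c =>
    rw [mulCoeff_coeff_C]
    exact hh.const_smul c
  | add p r hp hr =>
    rw [show (p + r).coeff = p.coeff + r.coeff from funext (coeff_add p r), add_mulCoeff]
    exact hp.add hr
  | monomial n c hn =>
    rw [pow_succ', mul_left_comm, coeff_mul_eq_mulCoeff, mulCoeff_assoc, mulCoeff_coeff_X]
    exact hn.shiftPow_one

/-- Multiplication by a multiplier of `D_α`, transported to `ℓ²`. -/
def IsMultiplier.mulLp (hφ : IsMultiplier α φ) :
    lp (fun _ : ℕ ↦ ℂ) 2 →ₗ[ℂ] lp (fun _ : ℕ ↦ ℂ) 2 where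
  toFun x := (hφ _ (memD_taylorCoeff x)).toLp
  map_add' x y := taylorCoeff_injective α <| by simp [taylorCoeff_toLp, mulCoeff_add]
  map_smul' c x := taylorCoeff_injective α <| by simp [taylorCoeff_toLp, mulCoeff_smul]

theorem IsMultiplier.taylorCoeff_mulLp (hφ : IsMultiplier α φ) (x : lp (fun _ : ℕ ↦ ℂ) 2) :
    taylorCoeff α (hφ.mulLp x) = mulCoeff φ (taylorCoeff α x) :=
  taylorCoeff_toLp (hφ _ (memD_taylorCoeff x))

theorem IsMultiplier.mulLp_toLp (hφ : IsMultiplier α φ) {h : ℕ → ℂ} (hh : MemD α h) :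
    hφ.mulLp hh.toLp = (hφ h hh).toLp :=
  taylorCoeff_injective α <| by simp only [hφ.taylorCoeff_mulLp, taylorCoeff_toLp]

theorem IsMultiplier.continuous_mulLp (hφ : IsMultiplier α φ) : Continuous hφ.mulLp := by
  refine hφ.mulLp.continuous_of_seq_closed_graph fun u x y hu hφu ↦ taylorCoeff_injective α ?_
  have tendsto_left : Tendsto (fun n ↦ mulCoeff φ (taylorCoeff α (u n))) atTop
      (𝓝 (taylorCoeff α y)) := by
    simpa only [Function.comp_def, hφ.taylorCoeff_mulLp] using
      ((taylorCoeff α).continuous.tendsto y).comp hφu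
  have tendsto_right : Tendsto (fun n ↦ mulCoeff φ (taylorCoeff α (u n))) atTop
      (𝓝 (mulCoeff φ (taylorCoeff α x))) :=
    (((continuous_mulCoeff φ).comp (taylorCoeff α).continuous).tendsto x).comp hu
  rw [hφ.taylorCoeff_mulLp]
  exact tendsto_nhds_unique tendsto_left tendsto_right

end Multipliers

section Cyclicity

variable {α : ℝ} {f g q : ℕ → ℂ}

/-- The polynomial multiple `p f` of a function `f` in `D_α`, as an element of `ℓ²`. -/
def MemD.polynomialMultiple (hf : MemD α f) (p : ℂ[X]) : lp (fun _ : ℕ ↦ ℂ) 2 :=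
  (isMultiplier_polynomial_coeff α p f hf).toLp

theorem cyclic_iff_mem_closure_range (hf : MemD α f) :
    Cyclic α f ↔ (memD_oneCoeff α).toLp ∈ closure (Set.range hf.polynomialMultiple) := by
  have cyclic_iff_tendsto : Cyclic α f ↔
      ∃ p : ℕ → ℂ[X], Tendsto (fun n ↦ hf.polynomialMultiple (p n)) atTop
        (𝓝 (memD_oneCoeff α).toLp) :=
    exists_congr fun p ↦ (tendsto_toLp_iff (fun n ↦ isMultiplier_polynomial_coeff α (p n) f hf)
      (memD_oneCoeff α)).symm
  rw [cyclic_iff_tendsto, mem_closure_iff_seq_limit]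
  constructor
  · rintro ⟨p, hp⟩
    exact ⟨_, fun n ↦ Set.mem_range_self (p n), hp⟩
  · rintro ⟨x, hx, hlim⟩
    choose p hp using hx
    exact ⟨p, by simpa only [hp] using hlim⟩

theorem IsMultiplier.toLp_mem_closure_range (hq : IsMultiplier α q) (hg : MemD α g)
    (hgcyc : Cyclic α g) (hf : MemD α f) (hqg : mulCoeff q g = f) :
    hq.memD.toLp ∈ closure (Set.range hf.polynomialMultiple) := by
  subst hqg
  have mulLp_one : hq.mulLp (memD_oneCoeff α).toLp = hq.memD.toLp := by
    simp only [hq.mulLp_toLp, mulCoeff_oneCoeff]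
  rw [← mulLp_one]
  refine map_mem_closure hq.continuous_mulLp ((cyclic_iff_mem_closure_range hg).mp hgcyc) ?_
  rintro _ ⟨p, rfl⟩
  refine ⟨p, ?_⟩
  simp only [MemD.polynomialMultiple, hq.mulLp_toLp, mulCoeff_left_comm p.coeff q g]

end Cyclicity

theorem cyclic_of_limit_general {ι : Type*} {l : Filter ι} [l.NeBot] {α : ℝ} {f : ℕ → ℂ}
    {fn q : ι → ℕ → ℂ} (hfn : ∀ i, MemD α (fn i)) (hcyc : ∀ i, Cyclic α (fn i))
    (hq : ∀ i, mulCoeff (q i) (fn i) = f) (hmul : ∀ i, IsMultiplier α (q i))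
    (hqone : Tendsto (fun i ↦ DNorm α (fun k ↦ oneCoeff k - q i k)) l (𝓝 0)) :
    Cyclic α f := by
  obtain ⟨i₀⟩ := l.nonempty_of_neBot
  have hf : MemD α f := hq i₀ ▸ hmul i₀ _ (hfn i₀)
  have tendsto_one : Tendsto (fun i ↦ (hmul i).memD.toLp) l (𝓝 (memD_oneCoeff α).toLp) := by
    rw [tendsto_toLp_iff]
    simpa only [DNorm, Pi.sub_apply, norm_sub_rev] using hqone
  have quotient_mem (i : ι) :
      (hmul i).memD.toLp ∈ closure (Set.range hf.polynomialMultiple) :=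
    (hmul i).toLp_mem_closure_range (hfn i) (hcyc i) hf (hq i)
  exact (cyclic_iff_mem_closure_range hf).mpr <|
    isClosed_closure.mem_of_tendsto tendsto_one (.of_forall quotient_mem)

/-- If `f_n` are cyclic for `D_α`, `f_n → f` in `D_α`, each quotient `q n = f / f_n` is a
multiplier of `D_α` with multiplier norm at most `C`, and `‖1 - f/f_n‖_α → 0`, then `f`
is cyclic for `D_α`. -/
theorem cyclic_of_limit (α : ℝ) (f : ℕ → ℂ) (fn : ℕ → ℕ → ℂ) (q : ℕ → ℕ → ℂ) (C : ℝ)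
    (hC : 0 < C)
    (hf : MemD α f) (hfn : ∀ n, MemD α (fn n))
    (hcyc : ∀ n, Cyclic α (fn n))
    (hconv : Tendsto (fun n => DNorm α (fun k => fn n k - f k)) atTop (𝓝 0))
    (hq : ∀ n, mulCoeff (q n) (fn n) = f)
    (hmul : ∀ n, ∀ h : ℕ → ℂ, MemD α h → MemD α (mulCoeff (q n) h))
    (hbd : ∀ n, ∀ h : ℕ → ℂ, MemD α h → DNorm α (mulCoeff (q n) h) ≤ C * DNorm α h)
    (hqone : Tendsto (fun n => DNorm α (fun k => oneCoeff k - q n k)) atTop (𝓝 0)) :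
    Cyclic α f :=
  cyclic_of_limit_general hfn hcyc hq hmul hqone
end
end

section
/- Let α > 1 and let {f_n} be a sequence of functions in D_α, none of which is cyclic for D_α, converging in the norm of D_α to a function f ∈ D_α. Then f is not cyclic for D_α. -/
open Filter Topology

noncomputable section

/-!
For `α > 1` the norm of `D_α`, multiplied by a suitable constant, is submultiplicative, so `D_α`
is a commutative Banach algebra. Polynomials are dense in it, hence a function is cyclic if and
only if it is invertible: once some `p * f` is close to `1` it is a unit, and conversely
polynomials `p n → f⁻¹` give `p n * f → 1`. Units form an open set, so the non-cyclic functions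
form a closed one.
-/

theorem isUnit_iff_exists_tendsto_mul_of_denseRange {ι R : Type*} [NormedCommRing R]
    [HasSummableGeomSeries R] {φ : ι → R} (hφ : DenseRange φ) {x : R} :
    IsUnit x ↔ ∃ u : ℕ → ι, Tendsto (fun n => φ (u n) * x) atTop (𝓝 1) := by
  constructor
  · rintro ⟨y, rfl⟩
    obtain ⟨v, hv_mem, hv⟩ := mem_closure_iff_seq_limit.1 (hφ (↑y⁻¹ : R))
    choose u hu using hv_mem
    refine ⟨u, ?_⟩
    simpa only [hu, Units.inv_mul] using hv.mul_const (y : R)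
  · rintro ⟨u, hu⟩
    obtain ⟨n, hn⟩ := (hu.eventually (Units.isOpen.mem_nhds isUnit_one)).exists
    exact isUnit_of_mul_isUnit_right hn

open Finset PowerSeries

/-- A positive weight `w` on `ℕ` with `w n * ∑_{i + j = n} 1 / (w i * w j) ≤ 1`. By Cauchy–Schwarz
this condition makes the norm of `ℓ²(w)` submultiplicative for convolution; the bound is
normalised to `1`, which is achieved by scaling the weight. -/
structure ConvolutionWeight where
  toFun : ℕ → ℝ
  pos' : ∀ n, 0 < toFun n
  mul_sum_inv_le_one' : ∀ n,
    toFun n * ∑ x ∈ antidiagonal n, (toFun x.1 * toFun x.2)⁻¹ ≤ 1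

namespace ConvolutionWeight

instance : CoeFun ConvolutionWeight fun _ => ℕ → ℝ := ⟨toFun⟩

theorem pos (w : ConvolutionWeight) (n : ℕ) : 0 < w n := w.pos' n

theorem mul_sum_inv_le_one (w : ConvolutionWeight) (n : ℕ) :
    w n * ∑ x ∈ antidiagonal n, (w x.1 * w x.2)⁻¹ ≤ 1 := w.mul_sum_inv_le_one' n

section NormedCommRing

variable {R : Type*} [NormedCommRing R] (w : ConvolutionWeight)

/-- The terms `‖a_k‖² w_k` of the squared norm of `∑ a_k X^k` in the weighted Hardy space of `w`. -/
def normSqTerm (F : R⟦X⟧) (k : ℕ) : ℝ := ‖coeff k F‖ ^ 2 * w k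

theorem normSqTerm_nonneg (F : R⟦X⟧) (k : ℕ) : 0 ≤ w.normSqTerm F k :=
  mul_nonneg (sq_nonneg _) (w.pos k).le

theorem normSqTerm_add_le (F G : R⟦X⟧) (k : ℕ) :
    w.normSqTerm (F + G) k ≤ 2 * (w.normSqTerm F k + w.normSqTerm G k) := by
  have h : ‖coeff k (F + G)‖ ^ 2 ≤ 2 * (‖coeff k F‖ ^ 2 + ‖coeff k G‖ ^ 2) := by
    grw [map_add, norm_add_le, add_sq_le]
  calc w.normSqTerm (F + G) k ≤ 2 * (‖coeff k F‖ ^ 2 + ‖coeff k G‖ ^ 2) * w k :=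
        mul_le_mul_of_nonneg_right h (w.pos k).le
    _ = 2 * (w.normSqTerm F k + w.normSqTerm G k) := by simp only [normSqTerm]; ring

theorem normSqTerm_neg (F : R⟦X⟧) : w.normSqTerm (-F) = w.normSqTerm F := by
  ext k
  simp [normSqTerm]

theorem normSqTerm_mul_le (F G : R⟦X⟧) (n : ℕ) :
    w.normSqTerm (F * G) n ≤
      ∑ x ∈ antidiagonal n, w.normSqTerm F x.1 * w.normSqTerm G x.2 := by
  have norm_le : ‖coeff n (F * G)‖ ≤ ∑ x ∈ antidiagonal n, ‖coeff x.1 F‖ * ‖coeff x.2 G‖ := by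
    rw [coeff_mul]
    exact norm_sum_le_of_le _ fun x _ => norm_mul_le _ _
  have cauchy_schwarz : (∑ x ∈ antidiagonal n, ‖coeff x.1 F‖ * ‖coeff x.2 G‖) ^ 2 ≤
      (∑ x ∈ antidiagonal n, w.normSqTerm F x.1 * w.normSqTerm G x.2) *
        ∑ x ∈ antidiagonal n, (w x.1 * w x.2)⁻¹ := by
    refine sum_sq_le_sum_mul_sum_of_sq_le_mul _
      (fun x _ => mul_nonneg (w.normSqTerm_nonneg F _) (w.normSqTerm_nonneg G _))
      (fun x _ => (inv_pos.2 (mul_pos (w.pos _) (w.pos _))).le) fun x _ => le_of_eq ?_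
    have := (w.pos x.1).ne'
    have := (w.pos x.2).ne'
    simp only [normSqTerm]
    field_simp
  calc w.normSqTerm (F * G) n
      ≤ (∑ x ∈ antidiagonal n, w.normSqTerm F x.1 * w.normSqTerm G x.2) *
          (∑ x ∈ antidiagonal n, (w x.1 * w x.2)⁻¹) * w n :=
        mul_le_mul_of_nonneg_right ((pow_le_pow_left₀ (norm_nonneg _) norm_le 2).trans
          cauchy_schwarz) (w.pos n).le
    _ = (∑ x ∈ antidiagonal n, w.normSqTerm F x.1 * w.normSqTerm G x.2) *
          (w n * ∑ x ∈ antidiagonal n, (w x.1 * w x.2)⁻¹) := by ring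
    _ ≤ ∑ x ∈ antidiagonal n, w.normSqTerm F x.1 * w.normSqTerm G x.2 :=
        mul_le_of_le_one_right
          (sum_nonneg fun x _ => mul_nonneg (w.normSqTerm_nonneg F _) (w.normSqTerm_nonneg G _))
          (w.mul_sum_inv_le_one n)

theorem summable_normSqTerm_coe (p : Polynomial R) : Summable (w.normSqTerm (p : R⟦X⟧)) :=
  summable_of_ne_finset_zero (s := p.support) fun k hk => by
    simp [normSqTerm, Polynomial.notMem_support_iff.mp hk]

variable {w} {F G : R⟦X⟧}

theorem summable_normSqTerm_mul_antidiagonal (hF : Summable (w.normSqTerm F))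
    (hG : Summable (w.normSqTerm G)) :
    Summable fun n => ∑ x ∈ antidiagonal n, w.normSqTerm F x.1 * w.normSqTerm G x.2 :=
  summable_sum_mul_antidiagonal_of_summable_mul
    (hF.mul_of_nonneg hG (w.normSqTerm_nonneg F) (w.normSqTerm_nonneg G))

theorem summable_normSqTerm_mul (hF : Summable (w.normSqTerm F))
    (hG : Summable (w.normSqTerm G)) : Summable (w.normSqTerm (F * G)) :=
  .of_nonneg_of_le (w.normSqTerm_nonneg _) (w.normSqTerm_mul_le F G)
    (summable_normSqTerm_mul_antidiagonal hF hG)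

theorem tsum_normSqTerm_mul_le (hF : Summable (w.normSqTerm F))
    (hG : Summable (w.normSqTerm G)) :
    ∑' n, w.normSqTerm (F * G) n ≤ (∑' n, w.normSqTerm F n) * ∑' n, w.normSqTerm G n := by
  rw [hF.tsum_mul_tsum_eq_tsum_sum_antidiagonal hG
    (hF.mul_of_nonneg hG (w.normSqTerm_nonneg F) (w.normSqTerm_nonneg G))]
  exact (summable_normSqTerm_mul hF hG).tsum_le_tsum (w.normSqTerm_mul_le F G)
    (summable_normSqTerm_mul_antidiagonal hF hG)

end NormedCommRing

section SummableInv

variable {v : ℕ → ℝ} {C : ℝ}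

theorem two_mul_tsum_inv_pos (hv : ∀ n, 0 < v n) (hC : 0 < C)
    (hs : Summable fun n => (v n)⁻¹) : 0 < 2 * C * ∑' k, (v k)⁻¹ :=
  mul_pos (by positivity) (hs.tsum_pos (fun k => (inv_pos.2 (hv k)).le) 0 (inv_pos.2 (hv 0)))

theorem mul_sum_inv_antidiagonal_le (hv : ∀ n, 0 < v n) (hC : 0 ≤ C)
    (hadd : ∀ i j, v (i + j) ≤ C * (v i + v j)) (hs : Summable fun n => (v n)⁻¹) (n : ℕ) :
    v n * ∑ x ∈ antidiagonal n, (v x.1 * v x.2)⁻¹ ≤ 2 * C * ∑' k, (v k)⁻¹ := by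
  have term_le : ∀ x ∈ antidiagonal n,
      v n * (v x.1 * v x.2)⁻¹ ≤ C * ((v x.1)⁻¹ + (v x.2)⁻¹) := by
    rintro ⟨i, j⟩ hx
    obtain rfl : i + j = n := mem_antidiagonal.1 hx
    have hi := hv i
    have hj := hv j
    calc v (i + j) * (v i * v j)⁻¹ ≤ C * (v i + v j) * (v i * v j)⁻¹ :=
          mul_le_mul_of_nonneg_right (hadd i j) (by positivity)
      _ = C * ((v i)⁻¹ + (v j)⁻¹) := by field_simp; ring
  have sum_fst : ∑ x ∈ antidiagonal n, (v x.1)⁻¹ = ∑ k ∈ range (n + 1), (v k)⁻¹ :=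
    Nat.sum_antidiagonal_eq_sum_range_succ (fun i _ => (v i)⁻¹) n
  have sum_snd : ∑ x ∈ antidiagonal n, (v x.2)⁻¹ = ∑ k ∈ range (n + 1), (v k)⁻¹ := by
    rw [← sum_fst, ← Nat.sum_antidiagonal_swap]
    rfl
  calc v n * ∑ x ∈ antidiagonal n, (v x.1 * v x.2)⁻¹
      ≤ ∑ x ∈ antidiagonal n, C * ((v x.1)⁻¹ + (v x.2)⁻¹) := by
        rw [mul_sum]
        exact sum_le_sum term_le
    _ = 2 * C * ∑ k ∈ range (n + 1), (v k)⁻¹ := by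
        rw [← mul_sum, sum_add_distrib, sum_fst, sum_snd]
        ring
    _ ≤ 2 * C * ∑' k, (v k)⁻¹ :=
        mul_le_mul_of_nonneg_left
          (hs.sum_le_tsum _ fun k _ => (inv_pos.2 (hv k)).le) (by positivity)

/-- The multiple `2C (∑ 1 / v k) • v` of a weight `v` with `v (i + j) ≤ C (v i + v j)` and
summable reciprocals, as a convolution weight. -/
def ofSummableInv (v : ℕ → ℝ) (C : ℝ) (hv : ∀ n, 0 < v n) (hC : 0 < C)
    (hadd : ∀ i j, v (i + j) ≤ C * (v i + v j)) (hs : Summable fun n => (v n)⁻¹) :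
    ConvolutionWeight where
  toFun n := 2 * C * (∑' k, (v k)⁻¹) * v n
  pos' n := mul_pos (two_mul_tsum_inv_pos hv hC hs) (hv n)
  mul_sum_inv_le_one' n := by
    have M_pos := two_mul_tsum_inv_pos hv hC hs
    set M := 2 * C * ∑' k, (v k)⁻¹
    calc M * v n * ∑ x ∈ antidiagonal n, (M * v x.1 * (M * v x.2))⁻¹
        = M⁻¹ * (v n * ∑ x ∈ antidiagonal n, (v x.1 * v x.2)⁻¹) := by
          simp only [mul_sum]
          refine sum_congr rfl fun x _ => ?_
          have := (hv x.1).ne'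
          have := (hv x.2).ne'
          field_simp
      _ ≤ M⁻¹ * M := mul_le_mul_of_nonneg_left
          (mul_sum_inv_antidiagonal_le hv hC.le hadd hs n) (inv_pos.2 M_pos).le
      _ = 1 := inv_mul_cancel₀ M_pos.ne'

end SummableInv

end ConvolutionWeight

/-- The weighted Hardy space `{∑ a_k X^k | ∑ ‖a_k‖² w_k < ∞}` of a convolution weight `w`, as a
subring of the ring of formal power series. -/
def weightedHardy (R : Type*) [NormedCommRing R] (w : ConvolutionWeight) : Subring R⟦X⟧ where
  carrier := {F | Summable (w.normSqTerm F)}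
  mul_mem' := ConvolutionWeight.summable_normSqTerm_mul
  one_mem' := by simpa using w.summable_normSqTerm_coe (1 : Polynomial R)
  add_mem' {F G} hF hG := .of_nonneg_of_le (w.normSqTerm_nonneg _) (w.normSqTerm_add_le F G)
    ((Summable.add hF hG).mul_left 2)
  zero_mem' := by simpa using w.summable_normSqTerm_coe (0 : Polynomial R)
  neg_mem' {F} hF := Summable.congr hF fun k => (congrFun (w.normSqTerm_neg F) k).symm

namespace weightedHardy

variable {R : Type*} [NormedCommRing R] {w : ConvolutionWeight}

/-- The inclusion of the polynomials into the weighted Hardy space of `w`. -/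
def ofPolynomial : Polynomial R →+* weightedHardy R w :=
  Polynomial.coeToPowerSeries.ringHom.codRestrict _ w.summable_normSqTerm_coe

theorem coe_ofPolynomial (p : Polynomial R) :
    ((ofPolynomial p : weightedHardy R w) : R⟦X⟧) = p := rfl

variable [NormedSpace ℝ R]

/-- The additive map `∑ a_k X^k ↦ (√w_k a_k)_k` identifying the weighted Hardy space of `w` with
`ℓ²`; the norm of the weighted Hardy space is transported along it. -/
def toLp : weightedHardy R w →+ lp (fun _ : ℕ => R) 2 where
  toFun F := ⟨fun k => √(w k) • coeff k (F : R⟦X⟧), memℓp_gen <| F.2.congr fun k => by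
    simp [ConvolutionWeight.normSqTerm, norm_smul, mul_pow, mul_comm, (w.pos k).le]⟩
  map_zero' := by ext k; simp
  map_add' F G := by
    ext k
    exact (congrArg _ (map_add _ _ _)).trans (smul_add _ _ _)

theorem toLp_apply (F : weightedHardy R w) (k : ℕ) :
    toLp F k = √(w k) • coeff k (F : R⟦X⟧) := rfl

theorem norm_toLp_apply_sq (F : weightedHardy R w) (k : ℕ) :
    ‖toLp F k‖ ^ 2 = w.normSqTerm (F : R⟦X⟧) k := by
  simp [toLp_apply, ConvolutionWeight.normSqTerm, norm_smul, mul_pow, mul_comm, (w.pos k).le]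

theorem toLp_injective : Function.Injective (toLp : weightedHardy R w → _) := by
  intro F G h
  ext k
  have hk : √(w k) • coeff k (F : R⟦X⟧) = √(w k) • coeff k (G : R⟦X⟧) := by
    rw [← toLp_apply, h, toLp_apply]
  exact smul_right_injective R (Real.sqrt_pos.2 (w.pos k)).ne' hk

theorem toLp_surjective : Function.Surjective (toLp : weightedHardy R w → _) := by
  intro a
  let F : R⟦X⟧ := .mk fun k => (√(w k))⁻¹ • a k
  have smul_coeff (k : ℕ) : √(w k) • coeff k F = a k := by
    rw [coeff_mk, smul_inv_smul₀ (Real.sqrt_pos.2 (w.pos k)).ne']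
  have summable_F : Summable (w.normSqTerm F) := by
    refine ((lp.memℓp a).summable (by simp)).congr fun k => ?_
    simp [← smul_coeff, ConvolutionWeight.normSqTerm, norm_smul, mul_pow, mul_comm, (w.pos k).le]
  exact ⟨⟨F, summable_F⟩, lp.ext (funext smul_coeff)⟩

instance : NormedAddCommGroup (weightedHardy R w) :=
  .induced _ _ toLp toLp_injective

theorem isometry_toLp : Isometry (toLp : weightedHardy R w → _) :=
  AddMonoidHomClass.isometry_of_norm _ fun _ => rfl

theorem norm_sq (F : weightedHardy R w) : ‖F‖ ^ 2 = ∑' k, w.normSqTerm (F : R⟦X⟧) k := by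
  calc ‖F‖ ^ 2 = ∑' k, ‖toLp F k‖ ^ 2 := by
        simpa using! lp.norm_rpow_eq_tsum (p := 2) (by simp) (toLp F)
    _ = ∑' k, w.normSqTerm (F : R⟦X⟧) k := tsum_congr (norm_toLp_apply_sq F)

instance : NormedCommRing (weightedHardy R w) where
  __ := (inferInstance : CommRing (weightedHardy R w))
  __ := (inferInstance : NormedAddCommGroup (weightedHardy R w))
  norm_mul_le F G := by
    refine (sq_le_sq₀ (norm_nonneg _) (by positivity)).1 ?_
    rw [mul_pow, norm_sq, norm_sq, norm_sq]
    exact ConvolutionWeight.tsum_normSqTerm_mul_le F.2 G.2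

instance [CompleteSpace R] : CompleteSpace (weightedHardy R w) :=
  (isometry_toLp.isUniformInducing.completeSpace_congr toLp_surjective).2 inferInstance

theorem hasSum_ofPolynomial_monomial (F : weightedHardy R w) :
    HasSum (fun k => ofPolynomial (Polynomial.monomial k (coeff k (F : R⟦X⟧)))) F := by
  have toLp_monomial (k : ℕ) : toLp (ofPolynomial (Polynomial.monomial k (coeff k (F : R⟦X⟧)))
      : weightedHardy R w) = lp.single 2 k (toLp F k) := by
    ext j
    obtain rfl | hjk := eq_or_ne j k
    · simp [toLp_apply, coe_ofPolynomial]
    · simp [toLp_apply, coe_ofPolynomial, PowerSeries.coeff_monomial, hjk]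
  rw [← isometry_toLp.isUniformInducing.isInducing.hasSum_iff]
  simpa only [Function.comp_def, toLp_monomial] using lp.hasSum_single (by simp) (toLp F)

theorem denseRange_ofPolynomial : DenseRange (ofPolynomial : Polynomial R → weightedHardy R w) :=
  fun F => mem_closure_of_tendsto (hasSum_ofPolynomial_monomial F) <| .of_forall fun s =>
    ⟨∑ k ∈ s, Polynomial.monomial k (coeff k (F : R⟦X⟧)), map_sum _ _ _⟩

end weightedHardy

section Dirichlet

theorem add_add_one_rpow_le {α : ℝ} (hα : 1 ≤ α) (i j : ℕ) :
    (((i + j : ℕ) : ℝ) + 1) ^ α ≤ 2 ^ (α - 1) * (((i : ℝ) + 1) ^ α + ((j : ℝ) + 1) ^ α) := by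
  calc (((i + j : ℕ) : ℝ) + 1) ^ α ≤ (((i : ℝ) + 1) + ((j : ℝ) + 1)) ^ α := by
        refine Real.rpow_le_rpow (by positivity) ?_ (by positivity)
        push_cast
        linarith
    _ ≤ 2 ^ (α - 1) * (((i : ℝ) + 1) ^ α + ((j : ℝ) + 1) ^ α) := by
        exact_mod_cast NNReal.rpow_add_le_mul_rpow_add_rpow (i + 1) (j + 1) hα

theorem summable_nat_add_one_rpow_inv {α : ℝ} (hα : 1 < α) :
    Summable fun k : ℕ => (((k : ℝ) + 1) ^ α)⁻¹ := by
  simpa using (summable_nat_add_iff 1).2 (Real.summable_nat_rpow_inv.2 hα)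

/-- A multiple of the weight `(k + 1) ^ α` of `D_α`. -/
def dirichletWeight {α : ℝ} (hα : 1 < α) : ConvolutionWeight :=
  .ofSummableInv (fun k => ((k : ℝ) + 1) ^ α) (2 ^ (α - 1)) (fun k => by positivity)
    (by positivity) (add_add_one_rpow_le hα.le) (summable_nat_add_one_rpow_inv hα)

variable {α : ℝ} (hα : 1 < α)

theorem exists_pos_dirichletWeight_eq :
    ∃ c > 0, ∀ k, dirichletWeight hα k = c * ((k : ℝ) + 1) ^ α :=
  ⟨dirichletWeight hα 0, (dirichletWeight hα).pos 0, fun k => by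
    simp [dirichletWeight, ConvolutionWeight.ofSummableInv]⟩

/-- The space `D_α` as a Banach algebra: its norm is a multiple of `DNorm α`. -/
abbrev DirichletAlgebra : Type := weightedHardy ℂ (dirichletWeight hα)

/-- The element of the Banach algebra `D_α` with Taylor coefficients `f`. -/
def MemD.toDirichletAlgebra {f : ℕ → ℂ} (hf : MemD α f) : DirichletAlgebra hα :=
  ⟨.mk f, by
    obtain ⟨c, -, hc⟩ := exists_pos_dirichletWeight_eq hα
    refine (Summable.mul_left c hf).congr fun k => ?_
    simp only [ConvolutionWeight.normSqTerm, hc, coeff_mk]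
    ring⟩

theorem MemD.coeff_toDirichletAlgebra {f : ℕ → ℂ} (hf : MemD α f) (k : ℕ) :
    coeff k (hf.toDirichletAlgebra hα : ℂ⟦X⟧) = f k := coeff_mk k f

namespace DirichletAlgebra

theorem exists_pos_norm_eq : ∃ c > 0, ∀ F : DirichletAlgebra hα,
    ‖F‖ = c * DNorm α fun k => coeff k (F : ℂ⟦X⟧) := by
  obtain ⟨c, hc_pos, hc⟩ := exists_pos_dirichletWeight_eq hα
  refine ⟨√c, Real.sqrt_pos.2 hc_pos, fun F => ?_⟩
  have norm_sq_eq : ‖F‖ ^ 2 = c * ∑' k, ‖coeff k (F : ℂ⟦X⟧)‖ ^ 2 * ((k : ℝ) + 1) ^ α := by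
    rw [weightedHardy.norm_sq, ← tsum_mul_left]
    simp only [ConvolutionWeight.normSqTerm, hc, mul_left_comm c]
  rw [DNorm, ← Real.sqrt_mul hc_pos.le, ← norm_sq_eq, Real.sqrt_sq (norm_nonneg F)]

theorem tendsto_iff_dNorm_tendsto_zero {ι : Type*} {l : Filter ι} {u : ι → DirichletAlgebra hα}
    {F : DirichletAlgebra hα} :
    Tendsto u l (𝓝 F) ↔
      Tendsto (fun n => DNorm α fun k => coeff k (u n : ℂ⟦X⟧) - coeff k (F : ℂ⟦X⟧)) l (𝓝 0) := by
  obtain ⟨c, hc_pos, hc⟩ := exists_pos_norm_eq hα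
  rw [tendsto_iff_norm_sub_tendsto_zero]
  simpa only [hc, AddSubgroupClass.coe_sub, map_sub, smul_eq_mul, mul_zero] using
    tendsto_const_smul_iff₀ (a := (0 : ℝ)) hc_pos.ne'

theorem coeff_ofPolynomial_mul {f : ℕ → ℂ} (hf : MemD α f) (p : Polynomial ℂ) (k : ℕ) :
    coeff k (weightedHardy.ofPolynomial p * hf.toDirichletAlgebra hα : DirichletAlgebra hα).1 =
      mulCoeff p.coeff f k := by
  change coeff k ((p : ℂ⟦X⟧) * .mk f) = _
  simp only [coeff_mul, Polynomial.coeff_coe, coeff_mk, mulCoeff]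
  exact Nat.sum_antidiagonal_eq_sum_range_succ (fun i j => p.coeff i * f j) k

theorem cyclic_iff_isUnit {f : ℕ → ℂ} (hf : MemD α f) :
    Cyclic α f ↔ IsUnit (hf.toDirichletAlgebra hα) := by
  rw [isUnit_iff_exists_tendsto_mul_of_denseRange weightedHardy.denseRange_ofPolynomial]
  simp only [tendsto_iff_dNorm_tendsto_zero, coeff_ofPolynomial_mul, Subring.coe_one, coeff_one]
  rfl

end DirichletAlgebra

end Dirichlet

/-- For `α > 1`, the limit in `D_α` of a sequence of non-cyclic functions is not cyclic. -/
theorem noncyclic_limit_of_noncyclic (α : ℝ) (hα : 1 < α)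
    (f : ℕ → ℂ) (fn : ℕ → ℕ → ℂ)
    (hf : MemD α f) (hfn : ∀ n, MemD α (fn n))
    (hnc : ∀ n, ¬ Cyclic α (fn n))
    (hconv : Tendsto (fun n => DNorm α (fun k => fn n k - f k)) atTop (𝓝 0)) :
    ¬ Cyclic α f := by
  have tendsto_f : Tendsto (fun n => (hfn n).toDirichletAlgebra hα) atTop
      (𝓝 (hf.toDirichletAlgebra hα)) := by
    simpa only [DirichletAlgebra.tendsto_iff_dNorm_tendsto_zero, MemD.coeff_toDirichletAlgebra]
      using hconv
  rw [DirichletAlgebra.cyclic_iff_isUnit hα hf]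
  exact nonunits.isClosed.mem_of_tendsto tendsto_f <| .of_forall fun n =>
    mt (DirichletAlgebra.cyclic_iff_isUnit hα (hfn n)).2 (hnc n)
end
end

section
/- Let α ≤ 1. For each integer n ≥ 1 let f_n(z) = 1 − 1/n − z and let f(z) = 1 − z. Then each f_n is not cyclic for D_α, ‖f_n − f‖_α → 0 as n → ∞, and f is cyclic for D_α. In particular, for every α ≤ 1 there exists a sequence of non-cyclic functions in D_α converging in norm to a cyclic function. -/
open Filter Topology

noncomputable section

/-!
Evaluation at `w` is the inner product with the kernel `k_w`. If `k_w ∈ D_α`, then evaluation at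
`w` is bounded on polynomials, and `(p f - 1)(w) = -1` for every `p` shows that no polynomial `f`
vanishing at `w` is cyclic. If `k_w ∉ D_α`, then its truncations `s_n` satisfy
`s_n(w) = ‖s_n‖² → ∞`, so `s_n / s_n(w)` takes the value `1` at `w` and has norm `‖s_n‖⁻¹ → 0`;
since `w - z` divides `1 - s_n / s_n(w)`, it is cyclic. Thus `w - z` is cyclic exactly when
`k_w ∉ D_α`, which for `α ≤ 1` means `1 ≤ |w|`.
-/

open Polynomial

section Norm

variable {α : ℝ}

lemma norm_dinner_le {a b : ℕ → ℂ} (ha : MemD α a) (hb : MemD α b) :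
    ‖Dinner α a b‖ ≤ DNorm α a * DNorm α b := by
  let u (c : ℕ → ℂ) (k : ℕ) : ℝ := ‖c k‖ * √(((k : ℝ) + 1) ^ α)
  have u_nonneg (c : ℕ → ℂ) (k : ℕ) : 0 ≤ u c k := by positivity
  have u_rpow_two (c : ℕ → ℂ) (k : ℕ) : u c k ^ (2 : ℝ) = ‖c k‖ ^ 2 * ((k : ℝ) + 1) ^ α := by
    rw [Real.rpow_two, mul_pow, Real.sq_sqrt (by positivity)]
  have norm_term (k : ℕ) :
      ‖a k * (starRingEnd ℂ) (b k) * ((((k : ℝ) + 1) ^ α : ℝ) : ℂ)‖ = u a k * u b k := by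
    have hk : (0 : ℝ) ≤ ((k : ℝ) + 1) ^ α := by positivity
    rw [norm_mul, norm_mul, RCLike.norm_conj, Complex.norm_of_nonneg hk, mul_mul_mul_comm,
      Real.mul_self_sqrt hk]
  obtain ⟨summable_mul, tsum_mul_le⟩ :=
    Real.summable_and_inner_le_Lp_mul_Lq_tsum_of_nonneg .two_two (u_nonneg a) (u_nonneg b)
      (by simpa only [u_rpow_two, MemD] using ha) (by simpa only [u_rpow_two, MemD] using hb)
  calc ‖Dinner α a b‖
      ≤ ∑' k, u a k * u b k := by
        simp only [← norm_term] at summable_mul ⊢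
        exact norm_tsum_le_tsum_norm summable_mul
    _ ≤ DNorm α a * DNorm α b := by
        simpa only [u_rpow_two, ← Real.sqrt_eq_rpow, DNorm] using tsum_mul_le

lemma dNorm_coeff_C_mul (α : ℝ) (c : ℂ) (p : ℂ[X]) :
    DNorm α (C c * p).coeff = ‖c‖ * DNorm α p.coeff := by
  simp only [DNorm, coeff_C_mul, norm_mul, mul_pow, mul_assoc, tsum_mul_left]
  rw [Real.sqrt_mul (sq_nonneg _), Real.sqrt_sq (norm_nonneg c)]

lemma memD_coeff (α : ℝ) (p : ℂ[X]) : MemD α p.coeff :=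
  summable_of_ne_finset_zero (s := p.support) fun k hk => by
    simp [notMem_support_iff.1 hk]

lemma dNorm_coeff_C (α : ℝ) (c : ℂ) : DNorm α (C c).coeff = ‖c‖ := by
  rw [DNorm, tsum_eq_single 0 fun k hk => by simp [coeff_C_of_ne_zero hk]]
  simp

end Norm

section Kernel

variable {α : ℝ} {w : ℂ}

lemma sq_norm_kern_mul_weight (α : ℝ) (w : ℂ) (k : ℕ) :
    ‖kern α w k‖ ^ 2 * ((k : ℝ) + 1) ^ α = (‖w‖ ^ 2) ^ k * ((k : ℝ) + 1) ^ (-α) := by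
  have hk : (0 : ℝ) < ((k : ℝ) + 1) ^ α := by positivity
  rw [kern, norm_div, norm_pow, RCLike.norm_conj, Complex.norm_of_nonneg hk.le,
    Real.rpow_neg (by positivity), pow_right_comm]
  field_simp

lemma conj_kern_mul_weight (α : ℝ) (w : ℂ) (k : ℕ) :
    (starRingEnd ℂ) (kern α w k) * ((((k : ℝ) + 1) ^ α : ℝ) : ℂ) = w ^ k := by
  have hk : ((((k : ℝ) + 1) ^ α : ℝ) : ℂ) ≠ 0 := Complex.ofReal_ne_zero.2 (by positivity)
  rw [kern, map_div₀, map_pow, Complex.conj_conj, Complex.conj_ofReal, div_mul_cancel₀ _ hk]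

lemma dinner_kern (α : ℝ) (w : ℂ) (a : ℕ → ℂ) :
    Dinner α a (kern α w) = ∑' k, a k * w ^ k := by
  simp only [Dinner, mul_assoc, conj_kern_mul_weight]

lemma dinner_coeff_kern (α : ℝ) (w : ℂ) (p : ℂ[X]) :
    Dinner α p.coeff (kern α w) = p.eval w := by
  rw [dinner_kern, eval_eq_sum, sum_def]
  exact tsum_eq_sum fun k hk => by simp [notMem_support_iff.1 hk]

lemma norm_eval_le_dNorm_mul (hw : MemD α (kern α w)) (p : ℂ[X]) :
    ‖p.eval w‖ ≤ DNorm α p.coeff * DNorm α (kern α w) := by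
  rw [← dinner_coeff_kern α]
  exact norm_dinner_le (memD_coeff α p) hw

lemma memD_kern_of_norm_lt_one (α : ℝ) (hw : ‖w‖ < 1) : MemD α (kern α w) := by
  obtain ⟨m, hm⟩ := exists_nat_ge (-α)
  have hw_sq : ‖(‖w‖ ^ 2)‖ < 1 := by
    rw [norm_pow, norm_norm]
    exact pow_lt_one₀ (norm_nonneg w) hw two_ne_zero
  refine (summable_descFactorial_mul_geometric_of_norm_lt_one m hw_sq).of_nonneg_of_le
    (fun k => by positivity) fun k => ?_
  rw [sq_norm_kern_mul_weight, mul_comm]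
  gcongr
  calc ((k : ℝ) + 1) ^ (-α)
      ≤ ((k : ℝ) + 1) ^ m := by
        rw [← Real.rpow_natCast]
        exact Real.rpow_le_rpow_of_exponent_le (by simp) hm
    _ ≤ (k + m).descFactorial m := by
        have := Nat.pow_sub_le_descFactorial (k + m) m
        rw [show k + m + 1 - m = k + 1 by lia] at this
        exact_mod_cast this

lemma not_memD_kern_of_one_le_norm (hα : α ≤ 1) (hw : 1 ≤ ‖w‖) : ¬ MemD α (kern α w) := by
  intro h
  refine hα.not_gt ((Real.summable_one_div_nat_add_rpow 1 α).1 ?_)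
  refine h.of_nonneg_of_le (fun k => by positivity) fun k => ?_
  rw [sq_norm_kern_mul_weight, abs_of_nonneg (by positivity), one_div,
    ← Real.rpow_neg (by positivity)]
  exact le_mul_of_one_le_left (by positivity) (one_le_pow₀ (one_le_pow₀ hw))

/-- The `n`-th partial sum `∑_{k<n} conj(w)^k z^k / (k+1)^α` of the reproducing kernel of
`D_α`; unlike the kernel it lies in `D_α` for every `w`. -/
def kernTrunc (α : ℝ) (w : ℂ) (n : ℕ) : ℂ[X] :=
  PowerSeries.trunc n (PowerSeries.mk (kern α w))

lemma coeff_kernTrunc (α : ℝ) (w : ℂ) (n k : ℕ) :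
    (kernTrunc α w n).coeff k = if k < n then kern α w k else 0 := by
  rw [kernTrunc, PowerSeries.coeff_trunc, PowerSeries.coeff_mk]

lemma dNorm_kernTrunc_sq (α : ℝ) (w : ℂ) (n : ℕ) :
    DNorm α (kernTrunc α w n).coeff ^ 2 =
      ∑ k ∈ Finset.range n, ‖kern α w k‖ ^ 2 * ((k : ℝ) + 1) ^ α := by
  rw [DNorm, Real.sq_sqrt (tsum_nonneg fun k => by positivity),
    tsum_eq_sum (s := Finset.range n) fun k hk => by simp_all [coeff_kernTrunc]]
  refine Finset.sum_congr rfl fun k hk => ?_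
  rw [coeff_kernTrunc, if_pos (Finset.mem_range.1 hk)]

lemma eval_kernTrunc (α : ℝ) (w : ℂ) (n : ℕ) :
    (kernTrunc α w n).eval w = ((DNorm α (kernTrunc α w n).coeff ^ 2 : ℝ) : ℂ) := by
  rw [dNorm_kernTrunc_sq, kernTrunc, eval, PowerSeries.eval₂_trunc_eq_sum_range,
    Complex.ofReal_sum]
  refine Finset.sum_congr rfl fun k _ => ?_
  rw [RingHom.id_apply, PowerSeries.coeff_mk, ← conj_kern_mul_weight α, ← mul_assoc,
    Complex.mul_conj', Complex.ofReal_mul, Complex.ofReal_pow]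

lemma tendsto_dNorm_kernTrunc_atTop (hw : ¬ MemD α (kern α w)) :
    Tendsto (fun n => DNorm α (kernTrunc α w n).coeff) atTop atTop := by
  rw [MemD, not_summable_iff_tendsto_nat_atTop_of_nonneg fun k => by positivity] at hw
  simp only [← dNorm_kernTrunc_sq] at hw
  simpa only [Function.comp_def, Real.sqrt_sq (Real.sqrt_nonneg _), DNorm] using
    Real.tendsto_sqrt_atTop.comp hw

end Kernel

section Cyclic

variable {α : ℝ} {w : ℂ}

lemma mulCoeff_coeff (p q : ℂ[X]) : mulCoeff p.coeff q.coeff = (p * q).coeff := by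
  funext k
  rw [coeff_mul, Finset.Nat.sum_antidiagonal_eq_sum_range_succ_mk, mulCoeff]

lemma cyclic_coeff_iff {f : ℂ[X]} :
    Cyclic α f.coeff ↔
      ∃ p : ℕ → ℂ[X], Tendsto (fun n => DNorm α (p n * f - 1).coeff) atTop (𝓝 0) := by
  have coeff_sub_one (p : ℂ[X]) :
      (fun k => mulCoeff p.coeff f.coeff k - oneCoeff k) = (p * f - 1).coeff := by
    funext k
    rw [mulCoeff_coeff, coeff_sub, coeff_one, oneCoeff]
  simp only [Cyclic, coeff_sub_one]

theorem not_cyclic_coeff_of_isRoot {f : ℂ[X]} (hw : MemD α (kern α w)) (hf : f.IsRoot w) :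
    ¬ Cyclic α f.coeff := by
  rw [cyclic_coeff_iff]
  rintro ⟨p, hp⟩
  have one_le (n : ℕ) : 1 ≤ DNorm α (p n * f - 1).coeff * DNorm α (kern α w) := by
    simpa [hf.eq_zero] using norm_eval_le_dNorm_mul hw (p n * f - 1)
  have := ge_of_tendsto' (hp.mul_const _) one_le
  norm_num at this

lemma cyclic_C_sub_X_of_tendsto {q : ℕ → ℂ[X]} (hq : ∀ᶠ n in atTop, (q n).eval w = 1)
    (hlim : Tendsto (fun n => DNorm α (q n).coeff) atTop (𝓝 0)) :
    Cyclic α (C w - X).coeff := by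
  rw [cyclic_coeff_iff]
  refine ⟨fun n => (q n - 1) /ₘ (X - C w), hlim.congr' (hq.mono fun n hn => ?_)⟩
  have quotient_mul : (X - C w) * ((q n - 1) /ₘ (X - C w)) = q n - 1 :=
    mul_divByMonic_eq_iff_isRoot.2 (by simp [hn])
  have : (q n - 1) /ₘ (X - C w) * (C w - X) - 1 = -q n := by
    linear_combination -quotient_mul
  simp [this, DNorm]

theorem cyclic_C_sub_X_of_not_memD_kern (hw : ¬ MemD α (kern α w)) :
    Cyclic α (C w - X).coeff := by
  let s : ℕ → ℂ[X] := kernTrunc α w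
  have eval_s (n : ℕ) : (s n).eval w = ((DNorm α (s n).coeff ^ 2 : ℝ) : ℂ) :=
    eval_kernTrunc α w n
  have dNorm_s_tendsto : Tendsto (fun n => DNorm α (s n).coeff) atTop atTop :=
    tendsto_dNorm_kernTrunc_atTop hw
  refine cyclic_C_sub_X_of_tendsto (q := fun n => C ((s n).eval w)⁻¹ * s n) ?_ ?_
  · filter_upwards [dNorm_s_tendsto.eventually_ne_atTop 0] with n hn
    have eval_ne_zero : (s n).eval w ≠ 0 := by
      rw [eval_s]
      exact_mod_cast pow_ne_zero 2 hn
    rw [eval_mul, eval_C, inv_mul_cancel₀ eval_ne_zero]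
  · have dNorm_normalized (n : ℕ) :
        DNorm α (C ((s n).eval w)⁻¹ * s n).coeff = (DNorm α (s n).coeff)⁻¹ := by
      rw [dNorm_coeff_C_mul, eval_s, norm_inv, Complex.norm_of_nonneg (sq_nonneg _)]
      field_simp
    simp only [dNorm_normalized]
    exact dNorm_s_tendsto.inv_tendsto_atTop

theorem cyclic_C_sub_X_iff (hα : α ≤ 1) : Cyclic α (C w - X).coeff ↔ 1 ≤ ‖w‖ where
  mp h := not_lt.1 fun hw =>
    not_cyclic_coeff_of_isRoot (memD_kern_of_norm_lt_one α hw) (by simp) h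
  mpr hw := cyclic_C_sub_X_of_not_memD_kern (not_memD_kern_of_one_le_norm hα hw)

end Cyclic

lemma coeff_C_sub_X (c : ℂ) (k : ℕ) :
    (C c - X).coeff k = if k = 0 then c else if k = 1 then -1 else 0 := by
  rcases k with _ | _ | k <;> simp [coeff_X, coeff_C]

/-- For `α ≤ 1`, the non-cyclic functions `f_n(z) = 1 - 1/n - z` converge in `D_α` to the
cyclic function `f(z) = 1 - z`. -/
theorem noncyclic_to_cyclic (α : ℝ) (hα : α ≤ 1) :
    (∀ n : ℕ, 1 ≤ n →
      ¬ Cyclic α (fun k => if k = 0 then (1 : ℂ) - 1 / (n : ℂ)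
        else if k = 1 then (-1 : ℂ) else 0)) ∧
    Tendsto (fun n : ℕ => DNorm α (fun k =>
        (if k = 0 then (1 : ℂ) - 1 / (n : ℂ) else if k = 1 then (-1 : ℂ) else 0) -
        (if k = 0 then (1 : ℂ) else if k = 1 then (-1 : ℂ) else 0))) atTop (𝓝 0) ∧
    Cyclic α (fun k => if k = 0 then (1 : ℂ) else if k = 1 then (-1 : ℂ) else 0) := by
  simp_rw [← coeff_C_sub_X]
  refine ⟨fun n hn => ?_, ?_, (cyclic_C_sub_X_iff hα).2 (by simp)⟩
  · rw [cyclic_C_sub_X_iff hα, not_le]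
    have one_div_n_pos : 0 < 1 / (n : ℝ) := by positivity
    have one_div_n_le_one : 1 / (n : ℝ) ≤ 1 := by simpa using Nat.cast_inv_le_one n
    calc ‖1 - 1 / (n : ℂ)‖ = 1 - 1 / (n : ℝ) := by
          rw [← Complex.norm_of_nonneg (sub_nonneg.2 one_div_n_le_one)]
          push_cast
          rfl
      _ < 1 := by linarith
  · simp_rw [← coeff_sub, sub_sub_sub_cancel_right, ← C_sub, dNorm_coeff_C]
    simpa using tendsto_one_div_atTop_nhds_zero_nat (𝕜 := ℝ)
end
end
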